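/- arXiv:2204.00580 — 2 statements merged into one kernel-verified Lean document; each statement's English description precedes it below -/
import Mathlib

section
/- (Lemma 2(a), concrete form) For every δ > 0 and γ > 0, every solution (xₐ, ȳₐ) of the cascade average system ẋₐ = −(γ/2)·b₁δ(xₐ), ẏ̄ₐ = −γ·ȳₐ + γ·a₀δ(xₐ)/2 on [0,∞) is bounded; moreover there exists x̂ ∈ [x* − δ, x* + δ] with b₁δ(x̂) = 0 such that xₐ(t) → x̂ and ȳₐ(t) → a₀δ(x̂)/2 as t → ∞. -/
open Real MeasureTheory intervalIntegral Filter

/-- First Fourier sine coefficient of `t ↦ h (x + δ sin (2π t))`. -/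
noncomputable def b1 (h : ℝ → ℝ) (δ x : ℝ) : ℝ :=
  2 * ∫ t in (0:ℝ)..1, h (x + δ * Real.sin (2 * Real.pi * t)) * Real.sin (2 * Real.pi * t)

/-- Zeroth Fourier coefficient of `t ↦ h (x + δ sin (2π t))`. -/
noncomputable def a0 (h : ℝ → ℝ) (δ x : ℝ) : ℝ :=
  2 * ∫ t in (0:ℝ)..1, h (x + δ * Real.sin (2 * Real.pi * t))

lemma aux_sin_int : ∫ t in (0:ℝ)..1, Real.sin (2 * Real.pi * t) = 0 := by
  rw [intervalIntegral.integral_comp_mul_left (f := Real.sin) (by positivity)]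
  simp

lemma aux_b1_cont (h : ℝ → ℝ) (hc : Continuous h) (δ : ℝ) : Continuous (b1 h δ) := by
  unfold b1
  refine continuous_const.mul ?_
  apply intervalIntegral.continuous_parametric_intervalIntegral_of_continuous'
  simp only [Function.uncurry_def]
  fun_prop

lemma aux_a0_cont (h : ℝ → ℝ) (hc : Continuous h) (δ : ℝ) : Continuous (a0 h δ) := by
  unfold a0
  refine continuous_const.mul ?_
  apply intervalIntegral.continuous_parametric_intervalIntegral_of_continuous'
  simp only [Function.uncurry_def]
  fun_prop

lemma aux_b1_pos (h : ℝ → ℝ) (hc : Continuous h) (δ x : ℝ) (hδ : 0 < δ)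
    (hm : StrictMonoOn h (Set.Icc (x - δ) (x + δ))) : 0 < b1 h δ x := by
  have key : 0 < ∫ t in (0:ℝ)..1,
      (h (x + δ * Real.sin (2 * Real.pi * t)) - h x) * Real.sin (2 * Real.pi * t) := by
    have hx : x ∈ Set.Icc (x - δ) (x + δ) := ⟨by linarith, by linarith⟩
    have hmem : ∀ s : ℝ, -1 ≤ s → s ≤ 1 → x + δ * s ∈ Set.Icc (x - δ) (x + δ) := by
      intro s h1 h2
      constructor <;> nlinarith
    apply intervalIntegral.integral_pos one_pos
    · fun_prop
    · intro t _
      have hs := hmem _ (Real.neg_one_le_sin (2 * Real.pi * t)) (Real.sin_le_one _)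
      generalize Real.sin (2 * Real.pi * t) = s at *
      rcases le_total 0 s with h0 | h0
      · have := hm.monotoneOn hx hs (by nlinarith)
        exact mul_nonneg (by linarith) h0
      · have := hm.monotoneOn hs hx (by nlinarith)
        exact mul_nonneg_of_nonpos_of_nonpos (by linarith) h0
    · refine ⟨1/4, ⟨by norm_num, by norm_num⟩, ?_⟩
      have e : 2 * Real.pi * (1/4) = Real.pi / 2 := by ring
      rw [e, Real.sin_pi_div_two]
      have := hm hx (hmem 1 (by norm_num) le_rfl) (by linarith)
      linarith
  have e : ∫ t in (0:ℝ)..1,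
      (h (x + δ * Real.sin (2 * Real.pi * t)) - h x) * Real.sin (2 * Real.pi * t)
      = ∫ t in (0:ℝ)..1, h (x + δ * Real.sin (2 * Real.pi * t)) * Real.sin (2 * Real.pi * t) := by
    simp only [sub_mul]
    rw [intervalIntegral.integral_sub, intervalIntegral.integral_const_mul, aux_sin_int]
    · simp
    · apply Continuous.intervalIntegrable; fun_prop
    · apply Continuous.intervalIntegrable; fun_prop
  rw [e] at key
  unfold b1
  linarith

lemma aux_b1_neg (h : ℝ → ℝ) (hc : Continuous h) (δ x : ℝ) (hδ : 0 < δ)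
    (hm : StrictAntiOn h (Set.Icc (x - δ) (x + δ))) : b1 h δ x < 0 := by
  have := aux_b1_pos (fun x => - h x) hc.neg δ x hδ (fun a ha b hb hab => neg_lt_neg (hm ha hb hab))
  unfold b1 at *
  simp only [neg_mul, intervalIntegral.integral_neg] at this
  linarith

lemma aux_b1_lip (h : ℝ → ℝ) (hs : ContDiff ℝ (⊤ : ℕ∞) h) (δ c a b : ℝ) (hδ : 0 < δ) :
    ∃ K : NNReal, LipschitzOnWith K (fun x => c * b1 h δ x) (Set.Icc a b) := by
  have hc : Continuous h := hs.continuous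
  obtain ⟨K, hK⟩ := (hs.contDiffOn (s := Set.Icc (a - δ) (b + δ))).exists_lipschitzOnWith
    (by simp) (convex_Icc _ _) isCompact_Icc
  refine ⟨‖c‖₊ * (2 * K), LipschitzOnWith.of_dist_le_mul ?_⟩
  intro x hx y hy
  have hb : |b1 h δ x - b1 h δ y| ≤ 2 * K * |x - y| := by
    unfold b1
    rw [← mul_sub, ← intervalIntegral.integral_sub]
    · have := intervalIntegral.norm_integral_le_of_norm_le_const (a := 0) (b := 1)
        (C := K * |x - y|)
        (f := fun t => h (x + δ * Real.sin (2 * Real.pi * t)) * Real.sin (2 * Real.pi * t)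
          - h (y + δ * Real.sin (2 * Real.pi * t)) * Real.sin (2 * Real.pi * t)) ?_
      · rw [abs_mul, abs_two]
        simp only [Real.norm_eq_abs, sub_zero, abs_one, mul_one] at this
        linarith
      · intro t _
        have h1 := Real.neg_one_le_sin (2 * Real.pi * t)
        have h2 := Real.sin_le_one (2 * Real.pi * t)
        have h3 := Real.abs_sin_le_one (2 * Real.pi * t)
        generalize Real.sin (2 * Real.pi * t) = s at *
        have hmem : ∀ z ∈ Set.Icc a b, z + δ * s ∈ Set.Icc (a - δ) (b + δ) := by
          intro z hz
          constructor <;> nlinarith [hz.1, hz.2]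
        have := hK.dist_le_mul _ (hmem x hx) _ (hmem y hy)
        rw [Real.dist_eq, Real.dist_eq, add_sub_add_right_eq_sub] at this
        rw [← sub_mul, Real.norm_eq_abs, abs_mul]
        calc _ ≤ |h (x + δ * s) - h (y + δ * s)| * 1 := by gcongr
          _ ≤ _ := by linarith
    · apply Continuous.intervalIntegrable; fun_prop
    · apply Continuous.intervalIntegrable; fun_prop
  rw [Real.dist_eq, Real.dist_eq, ← mul_sub, abs_mul]
  push_cast
  rw [Real.norm_eq_abs, mul_assoc]
  gcongr

lemma aux_antitone_conv (x f : ℝ → ℝ) (m : ℝ) (hx : ∀ t, 0 ≤ t → HasDerivAt x (f t) t)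
    (hf : ∀ t, 0 ≤ t → f t ≤ 0) (hm : ∀ t, 0 ≤ t → m ≤ x t) :
    ∃ l, Tendsto x atTop (nhds l) := by
  have ha : AntitoneOn x (Set.Ici 0) := by
    apply antitoneOn_of_deriv_nonpos (convex_Ici 0)
    · intro t ht
      exact (hx t ht).continuousAt.continuousWithinAt
    · intro t ht
      rw [interior_Ici] at ht
      exact (hx t (le_of_lt ht)).differentiableAt.differentiableWithinAt
    · intro t ht
      rw [interior_Ici] at ht
      rw [(hx t (le_of_lt ht)).deriv]
      exact hf t (le_of_lt ht)
  have hg : Antitone (fun t => x (max t 0)) := by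
    intro s t hst
    exact ha (Set.mem_Ici.2 (le_max_right _ _)) (Set.mem_Ici.2 (le_max_right _ _)) (max_le_max_right _ hst)
  have hb : BddBelow (Set.range (fun t => x (max t 0))) := by
    refine ⟨m, ?_⟩
    rintro _ ⟨t, rfl⟩
    exact hm _ (le_max_right _ _)
  refine ⟨_, (tendsto_atTop_ciInf hg hb).congr' ?_⟩
  filter_upwards [eventually_ge_atTop 0] with t ht
  simp [ht]

lemma aux_monotone_conv (x f : ℝ → ℝ) (m : ℝ) (hx : ∀ t, 0 ≤ t → HasDerivAt x (f t) t)
    (hf : ∀ t, 0 ≤ t → 0 ≤ f t) (hm : ∀ t, 0 ≤ t → x t ≤ m) :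
    ∃ l, Tendsto x atTop (nhds l) := by
  obtain ⟨l, hl⟩ := aux_antitone_conv (fun t => - x t) (fun t => - f t) (-m)
    (fun t ht => (hx t ht).neg) (fun t ht => by linarith [hf t ht])
    (fun t ht => by linarith [hm t ht])
  exact ⟨-l, by simpa using hl.neg⟩

lemma aux_deriv_lim (x f : ℝ → ℝ) (l m : ℝ) (hx : ∀ t, 0 ≤ t → HasDerivAt x (f t) t)
    (hl : Tendsto x atTop (nhds l)) (hf : Tendsto f atTop (nhds m)) : m = 0 := by
  have H : ∀ n : ℕ, ∃ c ∈ Set.Ioo (n:ℝ) (n + 1), f c = x (n + 1) - x n := by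
    intro n
    have hn : (0:ℝ) ≤ n := n.cast_nonneg
    obtain ⟨c, hc, e⟩ := exists_hasDerivAt_eq_slope x f (show (n:ℝ) < n + 1 by linarith)
      (fun t ht => (hx t (hn.trans ht.1)).continuousAt.continuousWithinAt)
      (fun t ht => hx t (hn.trans ht.1.le))
    exact ⟨c, hc, by simpa using e⟩
  choose c hc e using H
  have t1 : Tendsto c atTop atTop :=
    tendsto_atTop_mono (fun n => (hc n).1.le) tendsto_natCast_atTop_atTop
  have t2 := hf.comp t1
  have t3 : Tendsto (fun n : ℕ => x ((n:ℝ) + 1) - x n) atTop (nhds (l - l)) :=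
    (hl.comp (tendsto_atTop_add_const_right _ 1 tendsto_natCast_atTop_atTop)).sub
      (hl.comp tendsto_natCast_atTop_atTop)
  have t4 : Tendsto (f ∘ c) atTop (nhds (l - l)) := t3.congr (fun n => (e n).symm)
  simpa using tendsto_nhds_unique t2 t4

lemma aux_filter_upper (y u : ℝ → ℝ) (γ L : ℝ) (hγ : 0 < γ)
    (hy : ∀ t, 0 ≤ t → HasDerivAt y (-γ * y t + γ * u t) t)
    (hu : Tendsto u atTop (nhds L)) (a : ℝ) (ha : L < a) : ∀ᶠ t in atTop, y t < a := by
  obtain ⟨k, hk1, hk2⟩ := exists_between ha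
  obtain ⟨T, hT⟩ := eventually_atTop.1 ((hu.eventually (gt_mem_nhds hk1)).and (eventually_ge_atTop 0))
  have hT0 : 0 ≤ T := (hT T le_rfl).2
  have hd : ∀ t, 0 ≤ t → HasDerivAt (fun t => Real.exp (γ * t) * (y t - k))
      (γ * Real.exp (γ * t) * (u t - k)) t := by
    intro t ht
    have h1 : HasDerivAt (fun t => Real.exp (γ * t)) (Real.exp (γ * t) * (γ * 1)) t :=
      ((hasDerivAt_id t).const_mul γ).exp
    exact (h1.mul ((hy t ht).sub_const k)).congr_deriv (by ring)
  have hanti : AntitoneOn (fun t => Real.exp (γ * t) * (y t - k)) (Set.Ici T) := by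
    apply antitoneOn_of_deriv_nonpos (convex_Ici T)
    · intro t ht
      exact (hd t (hT0.trans ht)).continuousAt.continuousWithinAt
    · intro t ht
      rw [interior_Ici] at ht
      exact (hd t (hT0.trans (le_of_lt ht))).differentiableAt.differentiableWithinAt
    · intro t ht
      rw [interior_Ici] at ht
      rw [(hd t (hT0.trans (le_of_lt ht))).deriv]
      have := (hT t (le_of_lt ht)).1
      exact mul_nonpos_of_nonneg_of_nonpos (by positivity) (by linarith)
  set C := Real.exp (γ * T) * (y T - k) with hC
  have hlim : Tendsto (fun t => k + C * Real.exp (-(γ * t))) atTop (nhds (k + C * 0)) := by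
    refine tendsto_const_nhds.add (tendsto_const_nhds.mul ?_)
    exact Real.tendsto_exp_neg_atTop_nhds_zero.comp (tendsto_id.const_mul_atTop hγ)
  rw [mul_zero, add_zero] at hlim
  filter_upwards [hlim.eventually (gt_mem_nhds hk2), eventually_ge_atTop T] with t h1 h2
  have h3 : Real.exp (γ * t) * (y t - k) ≤ C := hanti (Set.self_mem_Ici) h2 h2
  have h4 : y t - k = Real.exp (-(γ * t)) * (Real.exp (γ * t) * (y t - k)) := by
    rw [← mul_assoc, ← Real.exp_add]; simp
  have h5 := mul_le_mul_of_nonneg_left h3 (Real.exp_pos (-(γ * t))).le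
  rw [← h4] at h5
  linarith

lemma aux_filter (y u : ℝ → ℝ) (γ L : ℝ) (hγ : 0 < γ)
    (hy : ∀ t, 0 ≤ t → HasDerivAt y (-γ * y t + γ * u t) t)
    (hu : Tendsto u atTop (nhds L)) : Tendsto y atTop (nhds L) := by
  rw [tendsto_order]
  constructor
  · intro a ha
    have := aux_filter_upper (fun t => - y t) (fun t => - u t) γ (-L) hγ
      (fun t ht => (hy t ht).neg.congr_deriv (by ring)) hu.neg (-a) (by linarith)
    filter_upwards [this] with t ht
    linarith
  · exact aux_filter_upper y u γ L hγ hy hu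

lemma aux_bdd (y : ℝ → ℝ) (l : ℝ) (hc : Continuous y) (hl : Tendsto y atTop (nhds l)) :
    ∃ M, ∀ t, 0 ≤ t → |y t| ≤ M := by
  obtain ⟨T, hT⟩ := eventually_atTop.1 (hl.abs.eventually (gt_mem_nhds (lt_add_one |l|)))
  obtain ⟨M, hM⟩ := (isCompact_Icc (a := 0) (b := T)).exists_bound_of_continuousOn hc.continuousOn
  refine ⟨max M (|l| + 1), fun t ht => ?_⟩
  rcases le_total t T with h | h
  · exact le_max_of_le_left (hM t ⟨ht, h⟩)
  · exact le_max_of_le_right (hT t h).le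

lemma aux_const (h : ℝ → ℝ) (hs : ContDiff ℝ (⊤ : ℕ∞) h) (δ c : ℝ) (hδ : 0 < δ)
    (x : ℝ → ℝ) (hc : Continuous x) (hx : ∀ t, 0 ≤ t → HasDerivAt x (c * b1 h δ (x t)) t)
    (t₁ : ℝ) (ht₁ : 0 ≤ t₁) (hz : b1 h δ (x t₁) = 0) (t : ℝ) (ht : t₁ ≤ t) : x t = x t₁ := by
  obtain ⟨M, hM⟩ := (isCompact_Icc (a := t₁) (b := t)).exists_bound_of_continuousOn hc.continuousOn
  obtain ⟨K, hK⟩ := aux_b1_lip h hs δ c (-M) M hδ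
  have hmem : ∀ s ∈ Set.Icc t₁ t, x s ∈ Set.Icc (-M) M := fun s hs => abs_le.1 (hM s hs)
  refine ODE_solution_unique_of_mem_Icc_right (v := fun _ x => c * b1 h δ x)
    (s := fun _ => Set.Icc (-M) M) (K := K) (f := x) (g := fun _ => x t₁) (a := t₁) (b := t)
    (fun _ _ => hK) hc.continuousOn
    (fun s hs => (hx s (ht₁.trans hs.1)).hasDerivWithinAt)
    (fun s hs => hmem s ⟨hs.1, hs.2.le⟩) continuousOn_const ?_
    (fun s hs => hmem t₁ ⟨le_rfl, ht⟩) rfl ⟨ht, le_rfl⟩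
  intro s _
  simp only [hz, mul_zero]
  exact hasDerivWithinAt_const _ _ _

/-- Lemma 2(a), concrete form: every solution of the cascade average system
is bounded and converges to an equilibrium over `[x* - δ, x* + δ]`. -/
theorem cascade_average_convergence (h : ℝ → ℝ) (hsmooth : ContDiff ℝ (⊤ : ℕ∞) h)
    (xstar : ℝ) (hmin : ∀ x : ℝ, x ≠ xstar → h xstar < h x)
    (α : ℝ → ℝ) (hα_cont : ContinuousOn α (Set.Ici 0))
    (hα_mono : StrictMonoOn α (Set.Ici 0)) (hα0 : α 0 = 0)
    (hα_top : Tendsto α atTop atTop)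
    (hlb : ∀ x₁ x₂ : ℝ, (x₁ - xstar) * (x₂ - xstar) ≥ 0 → α |x₂ - x₁| ≤ |h x₂ - h x₁|)
    (δ γ : ℝ) (hδ : 0 < δ) (hγ : 0 < γ)
    (xa ya : ℝ → ℝ) (hdx : Differentiable ℝ xa) (hdy : Differentiable ℝ ya)
    (hsolx : ∀ t : ℝ, 0 ≤ t → HasDerivAt xa (-(γ / 2) * b1 h δ (xa t)) t)
    (hsoly : ∀ t : ℝ, 0 ≤ t → HasDerivAt ya (-γ * ya t + γ * a0 h δ (xa t) / 2) t) :
    (∃ M : ℝ, ∀ t : ℝ, 0 ≤ t → |xa t| ≤ M ∧ |ya t| ≤ M) ∧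
    (∃ xhat ∈ Set.Icc (xstar - δ) (xstar + δ), b1 h δ xhat = 0 ∧
      Tendsto xa atTop (nhds xhat) ∧ Tendsto ya atTop (nhds (a0 h δ xhat / 2))) := by
  have hc : Continuous h := hsmooth.continuous
  have hxc : Continuous xa := hdx.continuous
  have hbc := aux_b1_cont h hc δ
  have hinj : ∀ x₁ x₂ : ℝ, (x₁ - xstar) * (x₂ - xstar) ≥ 0 → h x₁ = h x₂ → x₁ = x₂ := by
    intro x₁ x₂ h1 h2
    by_contra hne
    have hp : 0 < |x₂ - x₁| := abs_pos.2 (sub_ne_zero.2 (Ne.symm hne))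
    have h3 := hlb x₁ x₂ h1
    have h4 := hα_mono (Set.self_mem_Ici) hp.le hp
    rw [hα0] at h4
    rw [h2, sub_self, abs_zero] at h3
    linarith
  have hpos : ∀ x, xstar + δ ≤ x → 0 < b1 h δ x := by
    intro x hx
    apply aux_b1_pos h hc δ x hδ
    have hle : xstar < x + δ := by linarith
    have hi : Set.InjOn h (Set.Icc xstar (x + δ)) := fun a ha b hb hab =>
      hinj a b (mul_nonneg (by linarith [ha.1]) (by linarith [hb.1])) hab
    rcases hc.continuousOn.strictMonoOn_of_injOn_Icc' hle.le hi with H | H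
    · exact H.mono (Set.Icc_subset_Icc_left (by linarith))
    · have := H (Set.left_mem_Icc.2 hle.le) (Set.right_mem_Icc.2 hle.le) hle
      linarith [hmin _ hle.ne']
  have hneg : ∀ x, x ≤ xstar - δ → b1 h δ x < 0 := by
    intro x hx
    apply aux_b1_neg h hc δ x hδ
    have hle : x - δ < xstar := by linarith
    have hi : Set.InjOn h (Set.Icc (x - δ) xstar) := fun a ha b hb hab =>
      hinj a b (mul_nonneg_of_nonpos_of_nonpos (by linarith [ha.2]) (by linarith [hb.2])) hab
    rcases hc.continuousOn.strictMonoOn_of_injOn_Icc' hle.le hi with H | H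
    · have := H (Set.left_mem_Icc.2 hle.le) (Set.right_mem_Icc.2 hle.le) hle
      linarith [hmin _ hle.ne]
    · exact H.mono (Set.Icc_subset_Icc_right (by linarith))
  have hconv : ∃ l, Tendsto xa atTop (nhds l) := by
    by_cases hz : ∃ t₁, 0 ≤ t₁ ∧ b1 h δ (xa t₁) = 0
    · obtain ⟨t₁, ht₁, hz⟩ := hz
      refine ⟨xa t₁, tendsto_const_nhds.congr' ?_⟩
      filter_upwards [eventually_ge_atTop t₁] with t ht
      exact (aux_const h hsmooth δ _ hδ xa hxc hsolx t₁ ht₁ hz t ht).symm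
    · push Not at hz
      have hcont : ContinuousOn (fun t => b1 h δ (xa t)) (Set.Ici 0) :=
        (hbc.comp hxc).continuousOn
      have hIVT : ∀ s t : ℝ, 0 ≤ s → 0 ≤ t → b1 h δ (xa s) < 0 → 0 < b1 h δ (xa t) → False := by
        intro s t hs ht h1 h2
        obtain ⟨r, hr, e⟩ := (isPreconnected_Ici (a := (0:ℝ))).intermediate_value
          (a := s) (b := t) hs ht hcont ⟨h1.le, h2.le⟩
        exact hz r hr e
      rcases lt_or_gt_of_ne (hz 0 le_rfl) with h0 | h0
      · have hall : ∀ t, 0 ≤ t → b1 h δ (xa t) ≤ 0 := fun t ht =>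
          not_lt.1 fun H => hIVT 0 t le_rfl ht h0 H
        apply aux_monotone_conv xa _ (xstar + δ) hsolx
        · intro t ht
          exact mul_nonneg_of_nonpos_of_nonpos (by linarith) (hall t ht)
        · intro t ht
          by_contra H
          linarith [hall t ht, hpos (xa t) (by linarith)]
      · have hall : ∀ t, 0 ≤ t → 0 ≤ b1 h δ (xa t) := fun t ht =>
          not_lt.1 fun H => hIVT t 0 ht le_rfl H h0
        apply aux_antitone_conv xa _ (xstar - δ) hsolx
        · intro t ht
          exact mul_nonpos_of_nonpos_of_nonneg (by linarith) (hall t ht)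
        · intro t ht
          by_contra H
          linarith [hall t ht, hneg (xa t) (by linarith)]
  obtain ⟨xhat, hxhat⟩ := hconv
  have hb0 : b1 h δ xhat = 0 := by
    have := aux_deriv_lim xa _ xhat _ hsolx hxhat
      (((hbc.tendsto xhat).comp hxhat).const_mul (-(γ / 2)))
    rcases mul_eq_zero.1 this with H | H
    · linarith
    · exact H
  have hylim : Tendsto ya atTop (nhds (a0 h δ xhat / 2)) := by
    apply aux_filter ya (fun t => a0 h δ (xa t) / 2) γ _ hγ
    · intro t ht
      convert hsoly t ht using 1
      ring
    · exact (((aux_a0_cont h hc δ).tendsto xhat).comp hxhat).div_const 2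
  refine ⟨?_, xhat, ⟨?_, ?_⟩, hb0, hxhat, hylim⟩
  · obtain ⟨M₁, h₁⟩ := aux_bdd xa _ hxc hxhat
    obtain ⟨M₂, h₂⟩ := aux_bdd ya _ hdy.continuous hylim
    exact ⟨max M₁ M₂, fun t ht => ⟨le_max_of_le_left (h₁ t ht), le_max_of_le_right (h₂ t ht)⟩⟩
  · by_contra H
    linarith [hneg xhat (by linarith)]
  · by_contra H
    linarith [hpos xhat (by linarith)]
end

section
/- (Lemma 2(b), concrete form) There exists δ̄* > 0 such that for every δ ∈ (0, δ̄*] there exists x*ₐδ ∈ (x* − δ, x* + δ) with b₁δ(x*ₐδ) = 0 such that (x*ₐδ, a₀δ(x*ₐδ)/2) is an equilibrium of the cascade average system which is locally exponentially stable: for every γ > 0 there exist ρ, c, λ > 0 such that every solution (xₐ, ȳₐ) with ‖(xₐ(0) − x*ₐδ, ȳₐ(0) − a₀δ(x*ₐδ)/2)‖ ≤ ρ satisfies ‖(xₐ(t) − x*ₐδ, ȳₐ(t) − a₀δ(x*ₐδ)/2)‖ ≤ c·e^{−λt}·‖(xₐ(0) − x*ₐδ, ȳₐ(0) − a₀δ(x*ₐδ)/2)‖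 for all t ≥ 0. -/
open Real MeasureTheory intervalIntegral Filter

lemma aux_param_deriv (h : ℝ → ℝ) (hs : ContDiff ℝ 1 h) (δ x₀ : ℝ) (w : ℝ → ℝ)
    (hw : Continuous w) :
    HasDerivAt (fun x => ∫ t in (0:ℝ)..1, h (x + δ * Real.sin (2 * Real.pi * t)) * w t)
      (∫ t in (0:ℝ)..1, deriv h (x₀ + δ * Real.sin (2 * Real.pi * t)) * w t) x₀ := by
  have hd : Continuous (deriv h) := hs.continuous_deriv le_rfl
  have hc : Continuous h := hs.continuous
  obtain ⟨C, hC⟩ := (isCompact_Icc (a := x₀ - 1 - |δ|) (b := x₀ + 1 + |δ|)).exists_bound_of_continuousOn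
    hd.continuousOn
  refine (intervalIntegral.hasDerivAt_integral_of_dominated_loc_of_deriv_le
    (F := fun x t => h (x + δ * Real.sin (2 * Real.pi * t)) * w t)
    (F' := fun x t => deriv h (x + δ * Real.sin (2 * Real.pi * t)) * w t)
    (bound := fun t => C * ‖w t‖)
    (Metric.ball_mem_nhds x₀ one_pos) ?_ ?_ ?_ ?_ ?_ ?_).2
  · refine Eventually.of_forall fun x => ?_
    exact (by fun_prop : Continuous _).aestronglyMeasurable
  · exact (by fun_prop : Continuous _).intervalIntegrable _ _
  · exact (by fun_prop : Continuous _).aestronglyMeasurable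
  · refine Eventually.of_forall fun t _ x hx => ?_
    rw [norm_mul]
    refine mul_le_mul_of_nonneg_right (hC _ ?_) (norm_nonneg _)
    rw [Metric.mem_ball, Real.dist_eq, abs_lt] at hx
    have h1 : |δ * Real.sin (2 * Real.pi * t)| ≤ |δ| := by
      rw [abs_mul]
      exact mul_le_of_le_one_right (abs_nonneg _) (Real.abs_sin_le_one _)
    rw [abs_le] at h1
    constructor <;> linarith [h1.1, h1.2, hx.1, hx.2]
  · exact (by fun_prop : Continuous _).intervalIntegrable _ _
  · refine Eventually.of_forall fun t _ x _ => ?_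
    have h1 : HasDerivAt h (deriv h (x + δ * Real.sin (2 * Real.pi * t)))
        (x + δ * Real.sin (2 * Real.pi * t)) :=
      (hs.differentiable one_ne_zero _).hasDerivAt
    exact (h1.comp_add_const x _).mul_const _

lemma aux_b1_deriv (h : ℝ → ℝ) (hs : ContDiff ℝ 1 h) (δ x₀ : ℝ) :
    HasDerivAt (b1 h δ) (2 * ∫ t in (0:ℝ)..1, deriv h (x₀ + δ * Real.sin (2 * Real.pi * t)) *
      Real.sin (2 * Real.pi * t)) x₀ :=
  (aux_param_deriv h hs δ x₀ (fun t => Real.sin (2 * Real.pi * t)) (by fun_prop)).const_mul 2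

lemma aux_a0_deriv (h : ℝ → ℝ) (hs : ContDiff ℝ 1 h) (δ x₀ : ℝ) :
    HasDerivAt (a0 h δ) (2 * ∫ t in (0:ℝ)..1,
      deriv h (x₀ + δ * Real.sin (2 * Real.pi * t)) * 1) x₀ := by
  have := (aux_param_deriv h hs δ x₀ (fun _ => 1) (by fun_prop)).const_mul 2
  simp only [mul_one] at this ⊢
  exact this

/-- Integration by parts. -/
lemma aux_b1_parts (h : ℝ → ℝ) (hs : ContDiff ℝ 1 h) (δ x : ℝ) :
    b1 h δ x = 2 * (δ * ∫ t in (0:ℝ)..1, deriv h (x + δ * Real.sin (2 * Real.pi * t)) *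
      (1 - Real.sin (2 * Real.pi * t) ^ 2)) := by
  have hd : Continuous (deriv h) := hs.continuous_deriv le_rfl
  have hc : Continuous h := hs.continuous
  have key : ∫ t in (0:ℝ)..1, (2 * Real.pi) *
      (δ * (deriv h (x + δ * Real.sin (2 * Real.pi * t)) * (1 - Real.sin (2 * Real.pi * t) ^ 2))
        - h (x + δ * Real.sin (2 * Real.pi * t)) * Real.sin (2 * Real.pi * t)) = 0 := by
    rw [intervalIntegral.integral_eq_sub_of_hasDerivAt
      (f := fun t => h (x + δ * Real.sin (2 * Real.pi * t)) * Real.cos (2 * Real.pi * t))]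
    · simp
    · intro t _
      have h0 : HasDerivAt (fun t : ℝ => 2 * Real.pi * t) (2 * Real.pi) t := by
        simpa using (hasDerivAt_id t).const_mul (2 * Real.pi)
      have h1 : HasDerivAt h (deriv h (x + δ * Real.sin (2 * Real.pi * t)))
          (x + δ * Real.sin (2 * Real.pi * t)) :=
        (hs.differentiable one_ne_zero _).hasDerivAt
      have h2 := ((h0.sin.const_mul δ).const_add x)
      have h3 := (h1.comp t h2).mul h0.cos
      refine h3.congr_deriv ?_
      rw [← Real.cos_sq']
      simp only [Function.comp]
      ring
    · exact (by fun_prop : Continuous _).intervalIntegrable _ _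
  rw [intervalIntegral.integral_const_mul, intervalIntegral.integral_sub,
    intervalIntegral.integral_const_mul] at key
  · have hpi : (2 * Real.pi) ≠ 0 := by positivity
    have := (mul_eq_zero.mp key).resolve_left hpi
    unfold b1
    linarith
  · exact (by fun_prop : Continuous _).intervalIntegrable _ _
  · exact (by fun_prop : Continuous _).intervalIntegrable _ _

lemma aux_pos (g : ℝ → ℝ) (hg : Continuous g) (h0 : ∀ s ∈ Set.Icc (-1:ℝ) 1, 0 ≤ g s)
    (s₀ : ℝ) (hs₀ : s₀ ∈ Set.Icc (-1:ℝ) 1) (hpos : 0 < g s₀) :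
    0 < ∫ t in (0:ℝ)..1, g (Real.sin (2 * Real.pi * t)) := by
  refine intervalIntegral.integral_pos one_pos
    (by fun_prop : Continuous fun t : ℝ => g (Real.sin (2 * Real.pi * t))).continuousOn
    (fun t _ => h0 _ ⟨Real.neg_one_le_sin _, Real.sin_le_one _⟩) ?_
  have hp := Real.pi_pos
  have h1 := Real.arcsin_le_pi_div_two s₀
  have h2 := Real.neg_pi_div_two_le_arcsin s₀
  refine ⟨(Real.pi - Real.arcsin s₀) / (2 * Real.pi), ⟨by apply div_nonneg <;> linarith, ?_⟩, ?_⟩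
  · rw [div_le_one (by positivity)]; linarith
  · have : 2 * Real.pi * ((Real.pi - Real.arcsin s₀) / (2 * Real.pi)) = Real.pi - Real.arcsin s₀ := by
      field_simp
    rw [this, Real.sin_pi_sub, Real.sin_arcsin hs₀.1 hs₀.2]
    exact hpos

set_option maxHeartbeats 1000000 in
lemma aux_stab (a b : ℝ → ℝ) (p d a' : ℝ) (hb : HasDerivAt b d p) (hb0 : b p = 0) (hd : 0 < d)
    (ha : HasDerivAt a a' p) (γ : ℝ) (hγ : 0 < γ) :
    ∃ ρ c lam : ℝ, 0 < ρ ∧ 0 < c ∧ 0 < lam ∧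
      ∀ xa ya : ℝ → ℝ,
        (∀ t : ℝ, 0 ≤ t → HasDerivAt xa (-(γ / 2) * b (xa t)) t) →
        (∀ t : ℝ, 0 ≤ t → HasDerivAt ya (-γ * ya t + γ * a (xa t) / 2) t) →
        ‖(xa 0 - p, ya 0 - a p / 2)‖ ≤ ρ →
        ∀ t : ℝ, 0 ≤ t →
          ‖(xa t - p, ya t - a p / 2)‖ ≤
            c * Real.exp (-lam * t) * ‖(xa 0 - p, ya 0 - a p / 2)‖ := by
  obtain ⟨L, hL, hLb⟩ : ∃ L : ℝ, 0 < L ∧ ∀ᶠ x in nhds p, |a x - a p| ≤ L * |x - p| := by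
    obtain ⟨L, hL, h⟩ := ha.isBigO_sub.exists_pos
    exact ⟨L, hL, by simpa [Asymptotics.IsBigOWith] using h⟩
  obtain ⟨m, hm, hmd⟩ : ∃ m, 0 < m ∧ d = 2 * m := ⟨d / 2, by linarith, by ring⟩
  have hbb : ∀ᶠ x in nhds p, m * (x - p) ^ 2 ≤ (x - p) * b x := by
    have h := (hasDerivAt_iff_isLittleO.mp hb).def hm
    filter_upwards [h] with x hx
    simp only [hb0, Real.norm_eq_abs, smul_eq_mul, sub_zero] at hx
    have h1 : |(x - p) * (b x - (x - p) * d)| ≤ m * (x - p) ^ 2 := by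
      rw [abs_mul, ← sq_abs (x - p)]
      nlinarith [abs_nonneg (x - p)]
    rw [abs_le] at h1
    rw [hmd] at h1
    nlinarith [h1.1]
  obtain ⟨r, hr, hball⟩ := Metric.eventually_nhds_iff.mp (hLb.and hbb)
  -- Lyapunov weight
  obtain ⟨K, hK1, hKm⟩ : ∃ K : ℝ, 1 ≤ K ∧ L ^ 2 / 2 ≤ K * m :=
    ⟨L ^ 2 / (2 * m) + 1, by have : 0 ≤ L ^ 2 / (2 * m) := by positivity
                             linarith, by
      have : L ^ 2 / (2 * m) * m = L ^ 2 / 2 := by field_simp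
      nlinarith⟩
  obtain ⟨μ, hμ, hμ1, hμ2⟩ : ∃ μ : ℝ, 0 < μ ∧ μ ≤ m / 2 ∧ μ ≤ 1 :=
    ⟨min (m / 2) 1, by positivity, min_le_left _ _, min_le_right _ _⟩
  refine ⟨r / (2 * (K + 1)), K + 1, γ * μ / 4, by positivity, by positivity, by positivity, ?_⟩
  intro xa ya hxa hya hρ t ht
  set N0 := ‖(xa 0 - p, ya 0 - a p / 2)‖ with hN0
  have hN0' : 0 ≤ N0 := norm_nonneg _
  have hx0 : |xa 0 - p| ≤ N0 := norm_fst_le (xa 0 - p, ya 0 - a p / 2)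
  have hy0 : |ya 0 - a p / 2| ≤ N0 := norm_snd_le (xa 0 - p, ya 0 - a p / 2)
  set V : ℝ → ℝ := fun t => K * (xa t - p) ^ 2 + (ya t - a p / 2) ^ 2 with hV
  have hV0 : V 0 ≤ (K + 1) * N0 ^ 2 := by
    have h1 : (xa 0 - p) ^ 2 ≤ N0 ^ 2 := sq_le_sq' (abs_le.mp hx0).1 (abs_le.mp hx0).2
    have h2 : (ya 0 - a p / 2) ^ 2 ≤ N0 ^ 2 := sq_le_sq' (abs_le.mp hy0).1 (abs_le.mp hy0).2
    simp only [hV]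
    nlinarith
  have hV0r : V 0 < r ^ 2 := by
    have h1 : N0 * (2 * (K + 1)) ≤ r := by rwa [← le_div_iff₀ (by positivity)]
    have h2 : (N0 * (2 * (K + 1))) ^ 2 ≤ r ^ 2 := pow_le_pow_left₀ (by positivity) h1 2
    have h3 : 0 < r ^ 2 := by positivity
    nlinarith [sq_nonneg N0, mul_nonneg (by linarith : (0:ℝ) ≤ K) (sq_nonneg N0),
      mul_nonneg (by positivity : (0:ℝ) ≤ K ^ 2) (sq_nonneg N0)]
  have hVnn : ∀ t, 0 ≤ V t := fun t => by simp only [hV]; positivity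
  have hVd : ∀ t, 0 ≤ t → HasDerivAt V (K * (2 * (xa t - p) * (-(γ / 2) * b (xa t))) +
      2 * (ya t - a p / 2) * (-γ * ya t + γ * a (xa t) / 2)) t := by
    intro t ht
    have h1 := (((hxa t ht).sub_const p).pow 2).const_mul K
    have h2 := ((hya t ht).sub_const (a p / 2)).pow 2
    refine (h1.add h2).congr_deriv ?_
    simp
  have hdec : ∀ t, V t < r ^ 2 → K * (2 * (xa t - p) * (-(γ / 2) * b (xa t))) +
      2 * (ya t - a p / 2) * (-γ * ya t + γ * a (xa t) / 2) ≤ -(γ * μ) * V t := by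
    intro t hVt
    have hnear : |xa t - p| < r := by
      refine abs_lt_of_sq_lt_sq ?_ hr.le
      simp only [hV] at hVt
      nlinarith [sq_nonneg (xa t - p), sq_nonneg (ya t - a p / 2)]
    obtain ⟨hA, hB⟩ := hball (by rwa [Real.dist_eq] : dist (xa t) p < r)
    simp only [hV]
    set e := xa t - p
    have hg : (a (xa t) - a p) ^ 2 ≤ L ^ 2 * e ^ 2 := by
      rw [← sq_abs (a (xa t) - a p), ← sq_abs e, ← mul_pow]
      exact pow_le_pow_left₀ (abs_nonneg _) hA 2
    obtain ⟨z, hz⟩ : ∃ z, z = ya t - a p / 2 := ⟨_, rfl⟩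
    obtain ⟨g, hgd⟩ : ∃ g, g = a (xa t) - a p := ⟨_, rfl⟩
    rw [← hgd] at hg
    have hya' : ya t = z + a p / 2 := by rw [hz]; ring
    have ha' : a (xa t) = g + a p := by rw [hgd]; ring
    rw [hya', ha']
    have hzg : z * g ≤ z ^ 2 + L ^ 2 * e ^ 2 / 4 := by nlinarith [sq_nonneg (z - g / 2)]
    have hkb : K * (m * e ^ 2) ≤ K * (e * b (xa t)) :=
      mul_le_mul_of_nonneg_left hB (by linarith)
    have hle : L ^ 2 / 2 * e ^ 2 ≤ K * m * e ^ 2 := mul_le_mul_of_nonneg_right hKm (sq_nonneg _)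
    have hmu1 : μ * (K * e ^ 2) ≤ m / 2 * (K * e ^ 2) :=
      mul_le_mul_of_nonneg_right hμ1 (by positivity)
    have hmu2 : μ * z ^ 2 ≤ 1 * z ^ 2 := mul_le_mul_of_nonneg_right hμ2 (sq_nonneg _)
    have : 0 ≤ γ * (K * (e * b (xa t)) + 2 * z ^ 2 - z * g - μ * (K * e ^ 2 + z ^ 2)) := by
      apply mul_nonneg hγ.le
      linarith
    linarith
  have hmain : V t ≤ V 0 * Real.exp (-(γ * μ / 2) * t) := by
    have hε : ∀ ε : ℝ, 0 < ε → V 0 + ε < r ^ 2 →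
        V t ≤ (V 0 + ε) * Real.exp (-(γ * μ / 2) * t) := by
      intro ε hε hεr
      refine image_le_of_deriv_right_lt_deriv_boundary (f := V) (a := 0) (b := t)
        (f' := fun t => K * (2 * (xa t - p) * (-(γ / 2) * b (xa t))) +
          2 * (ya t - a p / 2) * (-γ * ya t + γ * a (xa t) / 2))
        (B := fun t => (V 0 + ε) * Real.exp (-(γ * μ / 2) * t))
        (B' := fun t => -(γ * μ / 2) * ((V 0 + ε) * Real.exp (-(γ * μ / 2) * t)))
        (fun s hs => (hVd s hs.1).continuousAt.continuousWithinAt)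
        (fun s hs => (hVd s hs.1).hasDerivWithinAt) ?_ ?_ ?_ ⟨ht, le_rfl⟩
      · simp; exact hε.le
      · intro s
        have h0 : HasDerivAt (fun t : ℝ => -(γ * μ / 2) * t) (-(γ * μ / 2)) s := by
          simpa using (hasDerivAt_id s).const_mul (-(γ * μ / 2))
        refine (h0.exp.const_mul (V 0 + ε)).congr_deriv ?_
        ring
      · intro s hs hVs
        have hpos : 0 < V s := by
          rw [hVs]
          have := hVnn 0
          positivity
        have hexp : Real.exp (-(γ * μ / 2) * s) ≤ 1 := by
          rw [Real.exp_le_one_iff]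
          have : 0 ≤ γ * μ / 2 * s := mul_nonneg (by positivity) hs.1
          linarith
        have hlt : V s < r ^ 2 := by
          rw [hVs]
          have := hVnn 0
          nlinarith
        have h1 := hdec s hlt
        rw [← hVs]
        have : 0 < γ * μ * V s := by positivity
        linarith
    refine le_of_tendsto_of_tendsto' (b := nhdsWithin (0:ℝ) (Set.Ioi 0))
      (f := fun ε => V t) (g := fun ε => max (V t) ((V 0 + ε) * Real.exp (-(γ * μ / 2) * t)))
      tendsto_const_nhds ?_ (fun ε => le_max_left _ _)
    have hT : Tendsto (fun ε => (V 0 + ε) * Real.exp (-(γ * μ / 2) * t))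
        (nhdsWithin (0:ℝ) (Set.Ioi 0)) (nhds (V 0 * Real.exp (-(γ * μ / 2) * t))) := by
      have : Continuous (fun ε : ℝ => (V 0 + ε) * Real.exp (-(γ * μ / 2) * t)) := by fun_prop
      have h := this.tendsto 0
      simp only [add_zero] at h
      exact h.mono_left nhdsWithin_le_nhds
    refine hT.congr' ?_
    have : ∀ᶠ ε in nhdsWithin (0:ℝ) (Set.Ioi 0), ε < r ^ 2 - V 0 :=
      nhdsWithin_le_nhds (eventually_lt_nhds (by linarith))
    filter_upwards [this, self_mem_nhdsWithin] with ε h1 h2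
    rw [max_eq_right (hε ε h2 (by linarith))]
  have hexp2 : Real.exp (-(γ * μ / 2) * t) = Real.exp (-(γ * μ / 4) * t) ^ 2 := by
    rw [← Real.exp_nat_mul]; congr 1; push_cast; ring
  have hfin : V t ≤ ((K + 1) * Real.exp (-(γ * μ / 4) * t) * N0) ^ 2 := by
    refine hmain.trans ?_
    rw [hexp2]
    have hE : 0 ≤ Real.exp (-(γ * μ / 4) * t) ^ 2 := by positivity
    calc V 0 * Real.exp (-(γ * μ / 4) * t) ^ 2
        ≤ ((K + 1) * N0 ^ 2) * Real.exp (-(γ * μ / 4) * t) ^ 2 :=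
          mul_le_mul_of_nonneg_right hV0 hE
      _ ≤ ((K + 1) ^ 2 * N0 ^ 2) * Real.exp (-(γ * μ / 4) * t) ^ 2 := by
          gcongr
          nlinarith
      _ = _ := by ring
  have hR : 0 ≤ (K + 1) * Real.exp (-(γ * μ / 4) * t) * N0 := by positivity
  rw [Prod.norm_def]
  simp only [hV] at hfin
  refine max_le ?_ ?_
  · rw [Real.norm_eq_abs]
    refine abs_le_of_sq_le_sq ?_ hR
    nlinarith [sq_nonneg (xa t - p), sq_nonneg (ya t - a p / 2)]
  · rw [Real.norm_eq_abs]
    refine abs_le_of_sq_le_sq ?_ hR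
    nlinarith [sq_nonneg (xa t - p), sq_nonneg (ya t - a p / 2)]

/-- Lemma 2(b), concrete form: for small `δ` the cascade average system has a
locally exponentially stable equilibrium. -/
theorem cascade_loc_exp_stable_equilibrium (h : ℝ → ℝ) (hsmooth : ContDiff ℝ (⊤ : ℕ∞) h)
    (xstar : ℝ) (hmin : ∀ x : ℝ, x ≠ xstar → h xstar < h x)
    (α : ℝ → ℝ) (hα_cont : ContinuousOn α (Set.Ici 0))
    (hα_mono : StrictMonoOn α (Set.Ici 0)) (hα0 : α 0 = 0)
    (hα_top : Tendsto α atTop atTop)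
    (hlb : ∀ x₁ x₂ : ℝ, (x₁ - xstar) * (x₂ - xstar) ≥ 0 → α |x₂ - x₁| ≤ |h x₂ - h x₁|) :
    ∃ δstar : ℝ, 0 < δstar ∧ ∀ δ : ℝ, δ ∈ Set.Ioc 0 δstar →
      ∃ xad ∈ Set.Ioo (xstar - δ) (xstar + δ), b1 h δ xad = 0 ∧
        ∀ γ : ℝ, 0 < γ → ∃ ρ c lam : ℝ, 0 < ρ ∧ 0 < c ∧ 0 < lam ∧
          ∀ xa ya : ℝ → ℝ, Differentiable ℝ xa → Differentiable ℝ ya →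
            (∀ t : ℝ, 0 ≤ t → HasDerivAt xa (-(γ / 2) * b1 h δ (xa t)) t) →
            (∀ t : ℝ, 0 ≤ t → HasDerivAt ya (-γ * ya t + γ * a0 h δ (xa t) / 2) t) →
            ‖(xa 0 - xad, ya 0 - a0 h δ xad / 2)‖ ≤ ρ →
            ∀ t : ℝ, 0 ≤ t →
              ‖(xa t - xad, ya t - a0 h δ xad / 2)‖ ≤
                c * Real.exp (-lam * t) * ‖(xa 0 - xad, ya 0 - a0 h δ xad / 2)‖ := by
  have hs : ContDiff ℝ 1 h := hsmooth.of_le (by exact_mod_cast le_top)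
  have hc : Continuous h := hs.continuous
  have hd : Continuous (deriv h) := hs.continuous_deriv le_rfl
  have hdiff : Differentiable ℝ h := hs.differentiable one_ne_zero
  have hinj : ∀ x₁ x₂ : ℝ, (x₁ - xstar) * (x₂ - xstar) ≥ 0 → h x₁ = h x₂ → x₁ = x₂ := by
    intro x₁ x₂ h1 h2
    by_contra hne
    have h3 := hlb x₁ x₂ h1
    have hp : 0 < |x₂ - x₁| := abs_pos.mpr (sub_ne_zero.mpr (Ne.symm hne))
    have h4 := hα_mono (Set.mem_Ici.mpr le_rfl) (Set.mem_Ici.mpr hp.le) hp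
    rw [h2, sub_self, abs_zero] at h3
    linarith
  have hR : ∀ x, xstar ≤ x → 0 ≤ deriv h x := by
    intro x hx
    have hab : xstar ≤ x + 1 := by linarith
    have hmono : StrictMonoOn h (Set.Icc xstar (x + 1)) :=
      ContinuousOn.strictMonoOn_of_injOn_Icc hab (hmin _ (by linarith)).le hc.continuousOn
        (fun u hu v hv huv => hinj u v (mul_nonneg (by linarith [hu.1]) (by linarith [hv.1])) huv)
    rw [← (hdiff x).derivWithin ((uniqueDiffOn_Icc (by linarith : xstar < x + 1)) x ⟨hx, by linarith⟩)]
    exact hmono.monotoneOn.derivWithin_nonneg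
  have hL : ∀ x, x ≤ xstar → deriv h x ≤ 0 := by
    intro x hx
    have hab : x - 1 ≤ xstar := by linarith
    have hmono : StrictAntiOn h (Set.Icc (x - 1) xstar) :=
      ContinuousOn.strictAntiOn_of_injOn_Icc hab (hmin _ (by linarith)).le hc.continuousOn
        (fun u hu v hv huv => hinj u v
          (mul_nonneg_of_nonpos_of_nonpos (by linarith [hu.2]) (by linarith [hv.2])) huv)
    rw [← (hdiff x).derivWithin ((uniqueDiffOn_Icc (by linarith : x - 1 < xstar)) x ⟨by linarith, hx⟩)]
    exact hmono.antitoneOn.derivWithin_nonpos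
  have hRp : ∀ y, xstar < y → ∃ c ∈ Set.Ioo xstar y, 0 < deriv h c := by
    intro y hy
    obtain ⟨c, hc1, hc2⟩ := exists_deriv_eq_slope h hy hc.continuousOn hdiff.differentiableOn
    exact ⟨c, hc1, by rw [hc2]; exact div_pos (by linarith [hmin y hy.ne']) (by linarith)⟩
  have hLp : ∀ y, y < xstar → ∃ c ∈ Set.Ioo y xstar, deriv h c < 0 := by
    intro y hy
    obtain ⟨c, hc1, hc2⟩ := exists_deriv_eq_slope h hy hc.continuousOn hdiff.differentiableOn
    exact ⟨c, hc1, by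
      rw [hc2]; exact div_neg_of_neg_of_pos (by linarith [hmin y hy.ne]) (by linarith)⟩
  refine ⟨1, one_pos, fun δ hδ => ?_⟩
  have hδ0 : 0 < δ := hδ.1
  have hbR : 0 < b1 h δ (xstar + δ) := by
    rw [aux_b1_parts h hs]
    obtain ⟨c, hc1, hc2⟩ := hRp (xstar + δ) (by linarith)
    have hs0 : xstar + δ + δ * ((c - xstar - δ) / δ) = c := by field_simp; ring
    have hs1 : -1 < (c - xstar - δ) / δ := by rw [lt_div_iff₀ hδ0]; linarith [hc1.1]
    have hs2 : (c - xstar - δ) / δ < 0 := div_neg_of_neg_of_pos (by linarith [hc1.2]) hδ0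
    have := aux_pos (fun s => deriv h (xstar + δ + δ * s) * (1 - s ^ 2)) (by fun_prop)
      (fun s hs => mul_nonneg (hR _ (by nlinarith [hs.1])) (by nlinarith [hs.1, hs.2]))
      ((c - xstar - δ) / δ) ⟨hs1.le, by linarith⟩ (by
        simp only [hs0]
        exact mul_pos hc2 (by nlinarith))
    positivity
  have hbL : b1 h δ (xstar - δ) < 0 := by
    rw [aux_b1_parts h hs]
    obtain ⟨c, hc1, hc2⟩ := hLp (xstar - δ) (by linarith)
    have hs0 : xstar - δ + δ * ((c - xstar + δ) / δ) = c := by field_simp; ring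
    have hs1 : (c - xstar + δ) / δ < 1 := by rw [div_lt_iff₀ hδ0]; linarith [hc1.2]
    have hs2 : 0 < (c - xstar + δ) / δ := div_pos (by linarith [hc1.1]) hδ0
    have := aux_pos (fun s => -(deriv h (xstar - δ + δ * s) * (1 - s ^ 2))) (by fun_prop)
      (fun s hs => neg_nonneg.mpr (mul_nonpos_of_nonpos_of_nonneg (hL _ (by nlinarith [hs.2]))
        (by nlinarith [hs.1, hs.2])))
      ((c - xstar + δ) / δ) ⟨by linarith, hs1.le⟩ (by
        simp only [hs0]
        exact neg_pos.mpr (mul_neg_of_neg_of_pos hc2 (by nlinarith)))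
    rw [intervalIntegral.integral_neg] at this
    nlinarith
  have hbc : Continuous (b1 h δ) :=
    continuous_iff_continuousAt.mpr fun x => (aux_b1_deriv h hs δ x).continuousAt
  obtain ⟨p, hp, hp0⟩ := intermediate_value_Ioo (by linarith : xstar - δ ≤ xstar + δ)
    hbc.continuousOn (show (0:ℝ) ∈ Set.Ioo _ _ from ⟨hbL, hbR⟩)
  refine ⟨p, hp, hp0, fun γ hγ => ?_⟩
  -- positivity of the derivative
  have hdpos : 0 < 2 * ∫ t in (0:ℝ)..1, deriv h (p + δ * Real.sin (2 * Real.pi * t)) *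
      Real.sin (2 * Real.pi * t) := by
    obtain ⟨c, hcd⟩ : ∃ c, c = (xstar - p) / δ := ⟨_, rfl⟩
    have hcδ : δ * c = xstar - p := by rw [hcd]; field_simp
    have hc1 : c < 1 := by rw [hcd, div_lt_one hδ0]; linarith [hp.1]
    have hc2 : -1 < c := by rw [hcd, lt_div_iff₀ hδ0]; linarith [hp.2]
    have hI2 : ∫ t in (0:ℝ)..1, deriv h (p + δ * Real.sin (2 * Real.pi * t)) *
        (1 - Real.sin (2 * Real.pi * t) ^ 2) = 0 := by
      have := aux_b1_parts h hs δ p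
      rw [hp0] at this
      have h2 := (mul_eq_zero.mp this.symm).resolve_left two_ne_zero
      exact (mul_eq_zero.mp h2).resolve_left hδ0.ne'
    obtain ⟨y, hy1, hy2⟩ := hRp (p + δ) (by linarith [hp.1, hp.2])
    have hs0 : p + δ * ((y - p) / δ) = y := by field_simp; ring
    have hs1 : (y - p) / δ < 1 := by rw [div_lt_one hδ0]; linarith [hy1.2]
    have hs2 : c < (y - p) / δ := by rw [lt_div_iff₀ hδ0]; linarith [hy1.1]
    have h1c : ∀ s ∈ Set.Icc (-1:ℝ) 1, 0 < 1 + c * s := by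
      intro s hs
      have : |c * s| < 1 := by
        rw [abs_mul]
        have h1 : |c| < 1 := abs_lt.mpr ⟨hc2, hc1⟩
        have h2 : |s| ≤ 1 := abs_le.mpr hs
        nlinarith [abs_nonneg c, abs_nonneg s]
      linarith [(abs_lt.mp this).1]
    have key := aux_pos (fun s => deriv h (p + δ * s) * ((s - c) * (1 + c * s))) (by fun_prop)
      (fun s hs => by
        have h1 := h1c s hs
        rcases le_total c s with hcs | hcs
        · exact mul_nonneg (hR _ (by nlinarith)) (mul_nonneg (by linarith) h1.le)
        · exact mul_nonneg_of_nonpos_of_nonpos (hL _ (by nlinarith))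
            (mul_nonpos_of_nonpos_of_nonneg (by linarith) h1.le))
      ((y - p) / δ) ⟨by linarith, hs1.le⟩ (by
        simp only [hs0]
        exact mul_pos hy2 (mul_pos (by linarith) (h1c _ ⟨by linarith, hs1.le⟩)))
    have heq : (∫ t in (0:ℝ)..1, deriv h (p + δ * Real.sin (2 * Real.pi * t)) *
        ((Real.sin (2 * Real.pi * t) - c) * (1 + c * Real.sin (2 * Real.pi * t)))) =
        (1 - c ^ 2) * (∫ t in (0:ℝ)..1, deriv h (p + δ * Real.sin (2 * Real.pi * t)) *
          Real.sin (2 * Real.pi * t)) - c * ∫ t in (0:ℝ)..1,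
            deriv h (p + δ * Real.sin (2 * Real.pi * t)) *
              (1 - Real.sin (2 * Real.pi * t) ^ 2) := by
      rw [← intervalIntegral.integral_const_mul, ← intervalIntegral.integral_const_mul,
        ← intervalIntegral.integral_sub]
      · congr 1; ext t; ring
      · exact (by fun_prop : Continuous _).intervalIntegrable _ _
      · exact (by fun_prop : Continuous _).intervalIntegrable _ _
    rw [heq, hI2, mul_zero, sub_zero] at key
    have := (pos_iff_pos_of_mul_pos key).mp (by nlinarith)
    linarith
  obtain ⟨ρ, c, lam, h1, h2, h3, h4⟩ := aux_stab (a0 h δ) (b1 h δ) p _ _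
    (aux_b1_deriv h hs δ p) hp0 hdpos (aux_a0_deriv h hs δ p) γ hγ
  exact ⟨ρ, c, lam, h1, h2, h3, fun xa ya _ _ hx hy => h4 xa ya hx hy⟩
end
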